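/- Proposition 1 (part 1): Under Assumption A, the optimal control-variate coefficient β* = −(E_g[T²] − α(γ)P(γ)) / var_g[Z] tends to −1 as γ → 0. -/

import Mathlib

open MeasureTheory Matrix Real Filter

noncomputable def mvnPdf {n : ℕ} (m : Fin n → ℝ) (S : Matrix (Fin n) (Fin n) ℝ)
    (y : Fin n → ℝ) : ℝ :=
  Real.exp (-(1/2) * ((y - m) ⬝ᵥ S⁻¹.mulVec (y - m))) / Real.sqrt ((2 * Real.pi) ^ n * S.det)

noncomputable def stdNormCDF (x : ℝ) : ℝ :=
  ∫ t in Set.Iic x, Real.exp (-t ^ 2 / 2) / Real.sqrt (2 * Real.pi)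
/-- Scaling the first coordinate by `τ⁻¹` multiplies the Lebesgue integral by `τ`. -/
theorem mul_integral_eq_integral_update_div {n : ℕ} {τ : ℝ} (hτ : 0 < τ)
    (h : (Fin (n + 1) → ℝ) → ℝ) :
    τ * ∫ x, h x = ∫ x, h (Function.update x 0 (x 0 / τ)) := by
  set D : Fin (n + 1) → ℝ := Function.update 1 0 τ⁻¹ with hD
  have hdet : det (diagonal D) = τ⁻¹ := by
    rw [det_diagonal, Fin.prod_univ_succ]
    simp [hD]
  have hdet0 : det (diagonal D) ≠ 0 := by rw [hdet]; positivity
  have hact : ∀ x, toLin' (diagonal D) x = Function.update x 0 (x 0 / τ) := by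
    intro x
    ext i
    rcases eq_or_ne i 0 with rfl | hi
    · simp [hD, mulVec_diagonal, div_eq_inv_mul]
    · simp [hD, mulVec_diagonal, hi]
  have hinj : Function.Injective (toLin' (diagonal D)) := by
    intro x y hxy
    rw [hact, hact] at hxy
    ext i
    have := congrFun hxy i
    rcases eq_or_ne i 0 with rfl | hi
    · simpa [div_left_inj' hτ.ne'] using this
    · simpa [hi] using this
  have hemb : MeasurableEmbedding (toLin' (diagonal D)) :=
    (LinearMap.isClosedEmbedding_of_injective
      (LinearMap.ker_eq_bot.2 hinj)).measurableEmbedding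
  have key : ∫ x, h x = |det (diagonal D)| * ∫ x, h (toLin' (diagonal D) x) := by
    conv_lhs => rw [← Real.smul_map_diagonal_volume_pi hdet0]
    rw [integral_smul_measure, hemb.integral_map, ENNReal.toReal_ofReal (abs_nonneg _),
      smul_eq_mul]
  simp_rw [hact] at key
  rw [key, hdet, abs_of_pos (inv_pos.2 hτ), ← mul_assoc, mul_inv_cancel₀ hτ.ne', one_mul]

/-- The half-space integral of `exp (k x₀)` against the restriction of `w` to `x₀ = 0`, extended
constantly in `x₀`. -/
noncomputable def tiltedHalfSpaceIntegral {n : ℕ} (k : ℝ) (w : (Fin (n + 1) → ℝ) → ℝ) : ℝ :=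
  ∫ x : Fin (n + 1) → ℝ, Set.indicator {x | x 0 < 0} (fun _ => (1 : ℝ)) x *
    (Real.exp (k * x 0) * w (Function.update x 0 0))

/-- A product majorant for the integrands obtained after rescaling the first coordinate. -/
noncomputable def halfSpaceMajorant {n : ℕ} (k c : ℝ) : Fin (n + 1) → ℝ → ℝ :=
  Fin.cons (Set.indicator (Set.Iic 0) fun s => Real.exp (k * s))
    fun _ s => Real.exp (-c * s ^ 2)

theorem integrable_prod_halfSpaceMajorant {n : ℕ} {k c : ℝ} (hk : 0 < k) (hc : 0 < c) :
    Integrable (fun x : Fin (n + 1) → ℝ => ∏ i, halfSpaceMajorant k c i (x i)) := by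
  refine Integrable.fintype_prod fun i => ?_
  refine Fin.cases ?_ (fun j => ?_) i
  · exact (integrable_indicator_iff measurableSet_Iic).2 (integrableOn_exp_mul_Iic hk 0)
  · exact integrable_exp_neg_mul_sq hc

theorem prod_halfSpaceMajorant_nonneg {n : ℕ} (k c : ℝ) (x : Fin (n + 1) → ℝ) :
    0 ≤ ∏ i, halfSpaceMajorant k c i (x i) := by
  refine Finset.prod_nonneg fun i _ => ?_
  refine Fin.cases ?_ (fun j => ?_) i
  · exact Set.indicator_nonneg (fun _ _ => Real.exp_nonneg _) _
  · exact Real.exp_nonneg _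

theorem exp_mul_update_le_majorant {n : ℕ} {k c C s : ℝ} (hc : 0 < c) (hC : 0 ≤ C)
    {w : (Fin (n + 1) → ℝ) → ℝ}
    (hw : ∀ x, w x ≤ C * Real.exp (-c * ∑ i, x i ^ 2)) {x : Fin (n + 1) → ℝ} (hx : x 0 ≤ 0) :
    Real.exp (k * x 0) * w (Function.update x 0 s) ≤
      C * ∏ i, halfSpaceMajorant k c i (x i) := by
  have h1 : ∏ i, halfSpaceMajorant k c i (x i) =
      Real.exp (k * x 0) * Real.exp (-c * ∑ i : Fin n, x i.succ ^ 2) := by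
    rw [Fin.prod_univ_succ, Finset.mul_sum, Real.exp_sum]
    simp [halfSpaceMajorant, hx]
  have h2 := hw (Function.update x 0 s)
  rw [Fin.sum_univ_succ] at h2
  simp only [Function.update_self, ne_eq, Fin.succ_ne_zero, not_false_eq_true,
    Function.update_of_ne] at h2
  have h3 : Real.exp (-c * (s ^ 2 + ∑ i : Fin n, x i.succ ^ 2)) ≤
      Real.exp (-c * ∑ i : Fin n, x i.succ ^ 2) := by
    apply Real.exp_le_exp.2
    nlinarith [mul_nonneg hc.le (sq_nonneg s)]
  rw [h1]
  calc _ ≤ Real.exp (k * x 0) * (C * Real.exp (-c * ∑ i : Fin n, x i.succ ^ 2)) := by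
        gcongr
        exact h2.trans (by gcongr)
    _ = _ := by ring

theorem tiltedHalfSpaceIntegral_pos {n : ℕ} {k c C : ℝ} (hk : 0 < k) (hc : 0 < c) (hC : 0 ≤ C)
    {w : (Fin (n + 1) → ℝ) → ℝ} (hwc : Continuous w) (hw0 : ∀ x, 0 < w x)
    (hw : ∀ x, w x ≤ C * Real.exp (-c * ∑ i, x i ^ 2)) :
    0 < tiltedHalfSpaceIntegral k w := by
  have hopen : IsOpen {x : Fin (n + 1) → ℝ | x 0 < 0} :=
    isOpen_lt (continuous_apply 0) continuous_const
  have hnn : ∀ x : Fin (n + 1) → ℝ,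
      0 ≤ Set.indicator {x : Fin (n + 1) → ℝ | x 0 < 0} (fun _ => (1 : ℝ)) x *
        (Real.exp (k * x 0) * w (Function.update x 0 0)) := fun x =>
    mul_nonneg (Set.indicator_nonneg (fun _ _ => zero_le_one) _)
      (mul_nonneg (Real.exp_nonneg _) (hw0 _).le)
  have hint : Integrable fun x : Fin (n + 1) → ℝ =>
      Set.indicator {x : Fin (n + 1) → ℝ | x 0 < 0} (fun _ => (1 : ℝ)) x *
        (Real.exp (k * x 0) * w (Function.update x 0 0)) := by
    refine ((integrable_prod_halfSpaceMajorant hk hc).const_mul C).mono' ?_ ?_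
    · refine (((measurable_const.indicator hopen.measurableSet)).mul ?_).aestronglyMeasurable
      exact (((continuous_const.mul (continuous_apply 0)).rexp).mul
        (hwc.comp (continuous_id.update 0 continuous_const))).measurable
    · refine Eventually.of_forall fun x => ?_
      rw [Real.norm_of_nonneg (hnn x)]
      by_cases hx : x 0 < 0
      · simpa [hx] using exp_mul_update_le_majorant hc hC hw hx.le
      · simp only [Set.indicator, Set.mem_ofPred_eq, hx, if_false, zero_mul]
        exact mul_nonneg hC (prod_halfSpaceMajorant_nonneg k c x)
  unfold tiltedHalfSpaceIntegral
  rw [integral_pos_iff_support_of_nonneg hnn hint]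
  refine lt_of_lt_of_le (hopen.measure_pos volume ⟨fun _ => -1, by simp⟩) (measure_mono ?_)
  intro x hx
  have hx' : x 0 < 0 := hx
  simp [hx', (hw0 _).ne']

theorem tendsto_mul_integral_indicator_exp_mul {n : ℕ} {k c C : ℝ} (hk : 0 < k) (hc : 0 < c)
    (hC : 0 ≤ C) {w : (Fin (n + 1) → ℝ) → ℝ} (hwc : Continuous w) (hw0 : ∀ x, 0 < w x)
    (hw : ∀ x, w x ≤ C * Real.exp (-c * ∑ i, x i ^ 2))
    {A : ℝ → Set (Fin (n + 1) → ℝ)} (hAm : ∀ τ, MeasurableSet (A τ))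
    (hA0 : ∀ τ, ∀ x ∈ A τ, x 0 ≤ 0)
    (hA : ∀ x : Fin (n + 1) → ℝ, x 0 < 0 →
      ∀ᶠ τ in atTop, Function.update x 0 (x 0 / τ) ∈ A τ) :
    Tendsto (fun τ => τ * ∫ x, Set.indicator (A τ) (fun _ => (1 : ℝ)) x *
      (Real.exp (k * τ * x 0) * w x)) atTop (nhds (tiltedHalfSpaceIntegral k w)) := by
  set F : ℝ → (Fin (n + 1) → ℝ) → ℝ := fun τ x =>
    Set.indicator (A τ) (fun _ => (1 : ℝ)) (Function.update x 0 (x 0 / τ)) *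
      (Real.exp (k * x 0) * w (Function.update x 0 (x 0 / τ))) with hF
  have hupd : ∀ τ : ℝ, Continuous fun x : Fin (n + 1) → ℝ => Function.update x 0 (x 0 / τ) :=
    fun τ => continuous_id.update 0 (by fun_prop)
  have hFlim : Tendsto (fun τ => ∫ x, F τ x) atTop (nhds (tiltedHalfSpaceIntegral k w)) := by
    refine tendsto_integral_filter_of_dominated_convergence
      (fun x => C * ∏ i, halfSpaceMajorant k c i (x i)) ?_ ?_
      ((integrable_prod_halfSpaceMajorant hk hc).const_mul C) ?_
    · refine Eventually.of_forall fun τ => Measurable.aestronglyMeasurable ?_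
      exact ((measurable_const.indicator (hAm τ)).comp (hupd τ).measurable).mul
        ((continuous_const.mul (continuous_apply 0)).rexp.mul
          (hwc.comp (hupd τ))).measurable
    · filter_upwards [eventually_gt_atTop 0] with τ hτ
      refine Eventually.of_forall fun x => ?_
      have hnn : 0 ≤ Real.exp (k * x 0) * w (Function.update x 0 (x 0 / τ)) :=
        mul_nonneg (Real.exp_nonneg _) (hw0 _).le
      by_cases hx : Function.update x 0 (x 0 / τ) ∈ A τ
      · have hx0 : x 0 ≤ 0 := by
          have := hA0 τ _ hx
          rw [Function.update_self, div_le_iff₀ hτ, zero_mul] at this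
          exact this
        simp only [hF, Set.indicator_of_mem hx, one_mul]
        rw [Real.norm_of_nonneg hnn]
        exact exp_mul_update_le_majorant hc hC hw hx0
      · simp only [hF, Set.indicator_of_notMem hx, zero_mul, norm_zero]
        exact mul_nonneg hC (prod_halfSpaceMajorant_nonneg k c x)
    · have hne : ∀ᵐ x : Fin (n + 1) → ℝ, x 0 ≠ 0 := Measure.ae_eval_ne (μ := fun _ => volume) 0 0
      filter_upwards [hne] with x hx
      have hw' : Tendsto (fun τ : ℝ => w (Function.update x 0 (x 0 / τ))) atTop
          (nhds (w (Function.update x 0 0))) := by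
        have h1 : Tendsto (fun τ : ℝ => x 0 / τ) atTop (nhds 0) :=
          tendsto_const_nhds.div_atTop tendsto_id
        have h2 : Continuous fun s : ℝ => Function.update x 0 s :=
          continuous_const.update 0 continuous_id
        exact ((hwc.comp h2).tendsto 0).comp h1
      refine Tendsto.mul ?_ (hw'.const_mul _)
      rcases hx.lt_or_gt with hneg | hpos
      · refine tendsto_const_nhds.congr' ?_
        filter_upwards [hA x hneg] with τ hτ
        rw [Set.indicator_of_mem hτ, Set.indicator_of_mem (by exact hneg)]
      · refine tendsto_const_nhds.congr' ?_
        filter_upwards [eventually_gt_atTop 0] with τ hτ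
        rw [Set.indicator_of_notMem, Set.indicator_of_notMem]
        · intro hmem
          have := hA0 τ _ hmem
          rw [Function.update_self] at this
          exact absurd (div_pos hpos hτ) this.not_gt
        · exact hpos.not_gt
  refine hFlim.congr' ?_
  filter_upwards [eventually_gt_atTop 0] with τ hτ
  rw [mul_integral_eq_integral_update_div hτ]
  refine integral_congr_ae (Eventually.of_forall fun x => ?_)
  have : k * τ * (x 0 / τ) = k * x 0 := by field_simp
  simp only [hF, Function.update_self, this]

theorem stdNormCDF_nonneg (x : ℝ) : 0 ≤ stdNormCDF x :=
  integral_nonneg fun _ => by positivity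

theorem stdNormCDF_neg_le {a : ℝ} (ha : 0 < a) :
    stdNormCDF (-a) ≤ Real.exp (-a ^ 2 / 2) / a := by
  have hpi : 1 ≤ Real.sqrt (2 * Real.pi) :=
    Real.one_le_sqrt.2 (by linarith [Real.pi_gt_three])
  have hint := (integrableOn_exp_mul_Iic ha (-a)).const_mul (Real.exp (a ^ 2 / 2))
  calc stdNormCDF (-a) ≤ ∫ t in Set.Iic (-a), Real.exp (a ^ 2 / 2) * Real.exp (a * t) := by
        refine integral_mono_of_nonneg (Eventually.of_forall fun t => by positivity) hint
          (Eventually.of_forall fun t => ?_)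
        refine (div_le_self (Real.exp_nonneg _) hpi).trans ?_
        beta_reduce
        rw [← Real.exp_add]
        apply Real.exp_le_exp.2
        nlinarith [sq_nonneg (t + a)]
    _ = Real.exp (-a ^ 2 / 2) / a := by
        rw [integral_const_mul, integral_exp_mul_Iic ha, ← mul_div_assoc, ← Real.exp_add]
        congr 2
        ring

/-- A positive definite quadratic form dominates a multiple of the sum of squares. -/
theorem Matrix.PosDef.exists_mul_sum_sq_le {n : ℕ} {M : Matrix (Fin (n + 1)) (Fin (n + 1)) ℝ}
    (hM : M.PosDef) : ∃ c > 0, ∀ x, c * ∑ i, x i ^ 2 ≤ x ⬝ᵥ M *ᵥ x := by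
  have hcont : Continuous fun x : Fin (n + 1) → ℝ => x ⬝ᵥ M *ᵥ x :=
    continuous_id.dotProduct (Continuous.matrix_mulVec continuous_const continuous_id)
  have hsq : Continuous fun x : Fin (n + 1) → ℝ => ∑ i, x i ^ 2 :=
    continuous_finsetSum _ fun i _ => (continuous_apply i).pow 2
  have hK : IsCompact {x : Fin (n + 1) → ℝ | ∑ i, x i ^ 2 = 1} := by
    refine Metric.isCompact_of_isClosed_isBounded (isClosed_eq hsq continuous_const) ?_
    refine (Metric.isBounded_closedBall (x := 0) (r := 1)).subset fun x hx => ?_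
    rw [mem_closedBall_zero_iff, pi_norm_le_iff_of_nonneg zero_le_one]
    intro i
    have h1 : x i ^ 2 ≤ ∑ i, x i ^ 2 :=
      Finset.single_le_sum (f := fun i => x i ^ 2) (fun _ _ => sq_nonneg _) (Finset.mem_univ i)
    rw [hx] at h1
    exact abs_le_one_iff_mul_self_le_one.2 (by nlinarith)
  obtain ⟨x₀, hx₀, hmin⟩ := hK.exists_isMinOn
    ⟨Pi.single 0 1, by simp [Fin.sum_univ_succ]⟩ hcont.continuousOn
  have hpos : ∀ {x : Fin (n + 1) → ℝ}, x ≠ 0 → 0 < x ⬝ᵥ M *ᵥ x := fun {x} hx => by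
    simpa using hM.dotProduct_mulVec_pos hx
  have hx₀' : x₀ ≠ 0 := by
    rintro rfl
    simp at hx₀
  refine ⟨_, hpos hx₀', fun x => ?_⟩
  rcases eq_or_ne x 0 with rfl | hx
  · simp
  have hs : 0 < ∑ i, x i ^ 2 := by
    obtain ⟨i, hi⟩ := Function.ne_iff.1 hx
    exact Finset.sum_pos' (fun _ _ => sq_nonneg _) ⟨i, Finset.mem_univ i, by
      have : x i ≠ 0 := hi
      positivity⟩
  set r := Real.sqrt (∑ i, x i ^ 2) with hr
  have hr2 : r ^ 2 = ∑ i, x i ^ 2 := Real.sq_sqrt hs.le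
  have hr0 : 0 < r := Real.sqrt_pos.2 hs
  have hmem : r⁻¹ • x ∈ {x : Fin (n + 1) → ℝ | ∑ i, x i ^ 2 = 1} := by
    simp only [Set.mem_ofPred_eq, Pi.smul_apply, smul_eq_mul, mul_pow, ← Finset.mul_sum, ← hr2]
    field_simp
  have h := isMinOn_iff.1 hmin _ hmem
  simp only [mulVec_smul, dotProduct_smul, smul_dotProduct, smul_eq_mul] at h
  rw [← hr2]
  calc _ ≤ (r⁻¹ * (r⁻¹ * (x ⬝ᵥ M *ᵥ x))) * r ^ 2 := by gcongr
    _ = _ := by field_simp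

theorem mvnPdf_pos {n : ℕ} {S : Matrix (Fin n) (Fin n) ℝ} (hS : S.PosDef) (m y : Fin n → ℝ) :
    0 < mvnPdf m S y := by
  have := hS.det_pos
  unfold mvnPdf
  positivity

theorem continuous_mvnPdf {n : ℕ} (m : Fin n → ℝ) (S : Matrix (Fin n) (Fin n) ℝ) :
    Continuous (mvnPdf m S) := by
  have h : Continuous fun y : Fin n → ℝ => y - m := continuous_id.sub continuous_const
  exact (continuous_const.mul (h.dotProduct
    (Continuous.matrix_mulVec continuous_const h))).rexp.div_const _

theorem exists_mvnPdf_zero_le {n : ℕ} {S : Matrix (Fin (n + 1)) (Fin (n + 1)) ℝ}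
    (hS : S.PosDef) : ∃ c > 0, ∃ C ≥ 0,
      ∀ x, mvnPdf 0 S x ≤ C * Real.exp (-c * ∑ i, x i ^ 2) := by
  obtain ⟨c, hc, h⟩ := hS.inv.exists_mul_sum_sq_le
  refine ⟨c / 2, by positivity, (Real.sqrt ((2 * Real.pi) ^ (n + 1) * S.det))⁻¹,
    by positivity, fun x => ?_⟩
  rw [mvnPdf, sub_zero, div_eq_inv_mul]
  refine mul_le_mul_of_nonneg_left (Real.exp_le_exp.2 ?_) (by positivity)
  linarith [h x]

theorem mvnPdf_add_add {n : ℕ} (m Λ x : Fin n → ℝ) (S : Matrix (Fin n) (Fin n) ℝ) :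
    mvnPdf (m + Λ) S (m + Λ + x) = mvnPdf 0 S x := by
  simp [mvnPdf]

/-- The likelihood ratio for a mean shift along the first column of the covariance matrix. -/
theorem mvnPdf_div_mvnPdf_shift {n : ℕ} {S : Matrix (Fin (n + 1)) (Fin (n + 1)) ℝ}
    (hS : S.PosDef) (m x : Fin (n + 1) → ℝ) {τ : ℝ} {Λ : Fin (n + 1) → ℝ}
    (hΛ : ∀ i, Λ i = -τ * (S i 0 / S 0 0)) :
    mvnPdf m S (m + Λ + x) / mvnPdf (m + Λ) S (m + Λ + x) =
      Real.exp (τ * x 0 / S 0 0 - τ ^ 2 / (2 * S 0 0)) := by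
  have hd := hS.det_pos
  have h00 : 0 < S 0 0 := hS.diag_pos
  have hΛ' : Λ = S *ᵥ Pi.single 0 (-τ / S 0 0) := by
    ext i
    rw [hΛ, mulVec_single]
    simp
    ring
  have hinv : S⁻¹ *ᵥ Λ = Pi.single 0 (-τ / S 0 0) := by
    rw [hΛ', mulVec_mulVec, nonsing_inv_mul _ hd.ne'.isUnit, one_mulVec]
  have hsymm : Λ ⬝ᵥ S⁻¹ *ᵥ x = x ⬝ᵥ S⁻¹ *ᵥ Λ := by
    have ht : (S⁻¹)ᵀ = S⁻¹ := by simpa using hS.inv.isHermitian.eq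
    rw [dotProduct_mulVec, ← mulVec_transpose, ht, dotProduct_comm]
  have hq : (m + Λ + x - m) ⬝ᵥ S⁻¹ *ᵥ (m + Λ + x - m) =
      x ⬝ᵥ S⁻¹ *ᵥ x - 2 * (τ * x 0 / S 0 0) + τ ^ 2 / S 0 0 := by
    have : m + Λ + x - m = Λ + x := by abel
    rw [this, mulVec_add, add_dotProduct, dotProduct_add, dotProduct_add, hsymm, hinv,
      dotProduct_single, dotProduct_single, hΛ]
    field_simp
    ring
  rw [mvnPdf_add_add, mvnPdf, mvnPdf, hq, div_div_div_cancel_right₀ (by positivity),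
    ← Real.exp_sub, sub_zero]
  congr 1
  field_simp
  ring

/-- Powers of the likelihood ratio integrated over a region, recentred at the shifted mean. -/
theorem integral_indicator_likelihoodRatio_pow {n : ℕ}
    {S : Matrix (Fin (n + 1)) (Fin (n + 1)) ℝ} (hS : S.PosDef) (m : Fin (n + 1) → ℝ) {τ : ℝ}
    {Λ : Fin (n + 1) → ℝ} (hΛ : ∀ i, Λ i = -τ * (S i 0 / S 0 0)) (p : ℕ)
    (B : Set (Fin (n + 1) → ℝ)) :
    ∫ y, Set.indicator B (fun _ => (1 : ℝ)) y * (mvnPdf m S y / mvnPdf (m + Λ) S y) ^ p *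
        mvnPdf (m + Λ) S y =
      Real.exp (-(p * τ ^ 2 / (2 * S 0 0))) *
        ∫ x, Set.indicator {x | m + Λ + x ∈ B} (fun _ => (1 : ℝ)) x *
          (Real.exp (p / S 0 0 * τ * x 0) * mvnPdf 0 S x) := by
  rw [← integral_add_left_eq_self _ (m + Λ), ← integral_const_mul]
  refine integral_congr_ae (Eventually.of_forall fun x => ?_)
  beta_reduce
  rw [mvnPdf_div_mvnPdf_shift hS m x hΛ, mvnPdf_add_add]
  have : Real.exp (τ * x 0 / S 0 0 - τ ^ 2 / (2 * S 0 0)) ^ p =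
      Real.exp (-(p * τ ^ 2 / (2 * S 0 0))) * Real.exp (p / S 0 0 * τ * x 0) := by
    rw [← Real.exp_nat_mul, ← Real.exp_add]
    congr 1
    ring
  rw [this]
  simp only [Set.indicator, Set.mem_ofPred_eq]
  ring

theorem tendsto_rescaled_likelihoodRatio_pow {n : ℕ}
    {S : Matrix (Fin (n + 1)) (Fin (n + 1)) ℝ} (hS : S.PosDef) (m : Fin (n + 1) → ℝ)
    {Λ : ℝ → Fin (n + 1) → ℝ} (hΛ : ∀ τ i, Λ τ i = -τ * (S i 0 / S 0 0)) {p : ℕ} (hp : 0 < p)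
    {B : ℝ → Set (Fin (n + 1) → ℝ)} (hBm : ∀ τ, MeasurableSet (B τ))
    (hB0 : ∀ τ x, m + Λ τ + x ∈ B τ → x 0 ≤ 0)
    (hB : ∀ x : Fin (n + 1) → ℝ, x 0 < 0 →
      ∀ᶠ τ in atTop, m + Λ τ + Function.update x 0 (x 0 / τ) ∈ B τ) :
    Tendsto (fun τ => τ * Real.exp (p * τ ^ 2 / (2 * S 0 0)) *
      ∫ y, Set.indicator (B τ) (fun _ => (1 : ℝ)) y *
        (mvnPdf m S y / mvnPdf (m + Λ τ) S y) ^ p * mvnPdf (m + Λ τ) S y) atTop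
      (nhds (tiltedHalfSpaceIntegral (p / S 0 0) (mvnPdf 0 S))) := by
  obtain ⟨c, hc, C, hC, hw⟩ := exists_mvnPdf_zero_le hS
  have h00 : 0 < S 0 0 := hS.diag_pos
  have hp' : (0 : ℝ) < p := Nat.cast_pos.2 hp
  refine (tendsto_mul_integral_indicator_exp_mul (div_pos hp' h00) hc hC (continuous_mvnPdf 0 S)
    (mvnPdf_pos hS 0) hw (A := fun τ => {x | m + Λ τ + x ∈ B τ})
    (fun τ => measurableSet_preimage (measurable_const_add _) (hBm τ))
    (fun τ x hx => hB0 τ x hx) hB).congr fun τ => ?_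
  rw [integral_indicator_likelihoodRatio_pow hS m (hΛ τ), mul_assoc, ← mul_assoc (Real.exp _),
    ← Real.exp_add, add_neg_cancel, Real.exp_zero, one_mul]

theorem eventually_sum_exp_le {n : ℕ} (m v x : Fin (n + 1) → ℝ) (hv0 : v 0 = 1)
    (hv : ∀ i : Fin n, 1 < v i.succ) (hx : x 0 < 0) :
    ∀ᶠ τ in atTop, ∑ i, Real.exp (m i + -τ * v i + Function.update x 0 (x 0 / τ) i) ≤
      Real.exp (m 0 - τ) := by
  have hterm : ∀ c d : ℝ, 0 < d →
      Tendsto (fun τ : ℝ => (τ - x 0) * Real.exp (c - τ * d)) atTop (nhds 0) := by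
    intro c d hd
    have h0 := tendsto_rpow_mul_exp_neg_mul_atTop_nhds_zero 0 d hd
    have h1 := tendsto_rpow_mul_exp_neg_mul_atTop_nhds_zero 1 d hd
    have h := ((h1.sub (h0.const_mul (x 0))).const_mul (Real.exp c))
    simp only [mul_zero, sub_zero, Real.rpow_one, Real.rpow_zero, one_mul] at h
    refine h.congr fun τ => ?_
    rw [sub_eq_add_neg c, Real.exp_add, show -(τ * d) = -d * τ by ring]
    ring
  have hsum : Tendsto (fun τ : ℝ => ∑ i : Fin n, (τ - x 0) *
      Real.exp ((m i.succ - m 0 + x i.succ) - τ * (v i.succ - 1))) atTop (nhds 0) := by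
    simpa using tendsto_finsetSum Finset.univ fun (i : Fin n) _ =>
      hterm (m i.succ - m 0 + x i.succ) (v i.succ - 1) (sub_pos.2 (hv i))
  filter_upwards [hsum.eventually_le_const (neg_pos.2 hx), eventually_gt_atTop 0] with τ hτ hτ0
  rw [← Finset.mul_sum] at hτ
  have hpos : 0 < τ - x 0 := by linarith
  have hhead : Real.exp (x 0 / τ) ≤ τ / (τ - x 0) := by
    have h := Real.add_one_le_exp (-(x 0 / τ))
    rw [Real.exp_neg, ← one_div, le_div_iff₀ (Real.exp_pos _)] at h
    rw [le_div_iff₀ hpos]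
    have : (-(x 0 / τ) + 1) * τ = τ - x 0 := by field_simp; ring
    calc _ = (-(x 0 / τ) + 1) * Real.exp (x 0 / τ) * τ := by rw [← this]; ring
      _ ≤ τ := mul_le_of_le_one_left hτ0.le h
  have htail : ∑ i : Fin n, Real.exp ((m i.succ - m 0 + x i.succ) - τ * (v i.succ - 1)) ≤
      -x 0 / (τ - x 0) := by
    rw [le_div_iff₀ hpos]
    linarith
  have hone : τ / (τ - x 0) + -x 0 / (τ - x 0) = 1 := by
    rw [← add_div, ← sub_eq_add_neg, div_self hpos.ne']
  have hfactor : ∑ i, Real.exp (m i + -τ * v i + Function.update x 0 (x 0 / τ) i) =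
      Real.exp (m 0 - τ) * (Real.exp (x 0 / τ) +
        ∑ i : Fin n, Real.exp ((m i.succ - m 0 + x i.succ) - τ * (v i.succ - 1))) := by
    rw [Fin.sum_univ_succ, mul_add, Finset.mul_sum]
    simp only [← Real.exp_add, Function.update_self, ne_eq, Fin.succ_ne_zero, not_false_eq_true,
      Function.update_of_ne, hv0]
    congr 1
    · congr 1
      ring
    · refine Finset.sum_congr rfl fun i _ => ?_
      congr 1
      ring
  rw [hfactor]
  exact mul_le_of_le_one_right (Real.exp_nonneg _) (by linarith)

/-- Scaled by `exp (τ² / (2 s))`, the lower normal tail at `-τ / √s` is `O(1 / τ)`. -/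
theorem exp_mul_stdNormCDF_le {s τ : ℝ} (hs : 0 < s) (hτ : 0 < τ) :
    Real.exp (τ ^ 2 / (2 * s)) * stdNormCDF (-τ / Real.sqrt s) ≤ Real.sqrt s / τ := by
  have hr : 0 < Real.sqrt s := Real.sqrt_pos.2 hs
  have h := stdNormCDF_neg_le (div_pos hτ hr)
  rw [← neg_div] at h
  calc _ ≤ Real.exp (τ ^ 2 / (2 * s)) *
        (Real.exp (-(τ / Real.sqrt s) ^ 2 / 2) / (τ / Real.sqrt s)) := by gcongr
    _ = Real.sqrt s / τ := by
        rw [← mul_div_assoc, ← Real.exp_add, div_pow, Real.sq_sqrt hs.le,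
          show τ ^ 2 / (2 * s) + -(τ ^ 2 / s) / 2 = 0 by field_simp; ring, Real.exp_zero,
          one_div_div]

theorem tendsto_exp_mul_stdNormCDF {s : ℝ} (hs : 0 < s) :
    Tendsto (fun τ => Real.exp (τ ^ 2 / (2 * s)) * stdNormCDF (-τ / Real.sqrt s)) atTop
      (nhds 0) := by
  refine tendsto_of_tendsto_of_tendsto_of_le_of_le' tendsto_const_nhds
    ((tendsto_const_nhds (x := Real.sqrt s)).div_atTop tendsto_id)
    (Eventually.of_forall fun τ => mul_nonneg (Real.exp_nonneg _) (stdNormCDF_nonneg _)) ?_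
  filter_upwards [eventually_gt_atTop 0] with τ hτ using exp_mul_stdNormCDF_le hs hτ

theorem tendsto_mul_exp_mul_stdNormCDF_sq {s : ℝ} (hs : 0 < s) :
    Tendsto (fun τ => τ * (Real.exp (τ ^ 2 / (2 * s)) * stdNormCDF (-τ / Real.sqrt s)) ^ 2) atTop
      (nhds 0) := by
  refine tendsto_of_tendsto_of_tendsto_of_le_of_le' tendsto_const_nhds
    ((tendsto_const_nhds (x := s)).div_atTop tendsto_id) ?_ ?_
  · filter_upwards [eventually_gt_atTop 0] with τ hτ
    positivity
  · filter_upwards [eventually_gt_atTop 0] with τ hτ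
    have h0 : 0 ≤ Real.exp (τ ^ 2 / (2 * s)) * stdNormCDF (-τ / Real.sqrt s) :=
      mul_nonneg (Real.exp_nonneg _) (stdNormCDF_nonneg _)
    calc _ ≤ τ * (Real.sqrt s / τ) ^ 2 := by
          gcongr
          exact exp_mul_stdNormCDF_le hs hτ
      _ = s / id τ := by
          rw [div_pow, Real.sq_sqrt hs.le, id]
          field_simp

theorem stmt15 {n : ℕ} (m : Fin (n + 1) → ℝ) (S : Matrix (Fin (n + 1)) (Fin (n + 1)) ℝ)
    (hS : S.PosDef)
    (hA : ∀ j : Fin (n + 1), j ≠ 0 →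
      Real.sqrt (S 0 0) < S 0 j / Real.sqrt (S 0 0 * S j j) * Real.sqrt (S j j)) :
    let Λ : ℝ → Fin (n + 1) → ℝ := fun γ k =>
      if k = 0 then Real.log γ - m 0 else S k 0 / S 0 0 * (Real.log γ - m 0)
    let g : ℝ → (Fin (n + 1) → ℝ) → ℝ := fun γ y => mvnPdf (m + Λ γ) S y
    let L : ℝ → (Fin (n + 1) → ℝ) → ℝ := fun γ y => mvnPdf m S y / g γ y
    let ET2 : ℝ → ℝ := fun γ => ∫ y : Fin (n + 1) → ℝ,
      Set.indicator {y : Fin (n + 1) → ℝ | ∑ i, Real.exp (y i) ≤ γ} (fun _ => (1 : ℝ)) y *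
        (L γ y) ^ 2 * g γ y
    let EZ2 : ℝ → ℝ := fun γ => ∫ y : Fin (n + 1) → ℝ,
      Set.indicator {y : Fin (n + 1) → ℝ | Real.exp (y 0) ≤ γ} (fun _ => (1 : ℝ)) y *
        (L γ y) ^ 2 * g γ y
    let α : ℝ → ℝ := fun γ => ∫ y : Fin (n + 1) → ℝ,
      Set.indicator {y : Fin (n + 1) → ℝ | ∑ i, Real.exp (y i) ≤ γ} (fun _ => (1 : ℝ)) y *
        L γ y * g γ y
    let P : ℝ → ℝ := fun γ => stdNormCDF ((Real.log γ - m 0) / Real.sqrt (S 0 0))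
    Filter.Tendsto (fun γ : ℝ => -(ET2 γ - α γ * P γ) / (EZ2 γ - P γ ^ 2))
      (nhdsWithin 0 (Set.Ioi 0)) (nhds (-1)) := by
  intro Λ g L ET2 EZ2 α P
  have h00 : 0 < S 0 0 := hS.diag_pos
  have hslope : ∀ i : Fin n, 1 < S i.succ 0 / S 0 0 := by
    intro i
    have hii : 0 < S i.succ i.succ := hS.diag_pos
    have h := hA i.succ (Fin.succ_ne_zero i)
    rw [Real.sqrt_mul h00.le, div_mul_eq_mul_div,
      mul_div_mul_right _ _ (Real.sqrt_pos.2 hii).ne', lt_div_iff₀ (Real.sqrt_pos.2 h00),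
      Real.mul_self_sqrt h00.le] at h
    have hsymm : S i.succ 0 = S 0 i.succ := by simpa using hS.isHermitian.apply 0 i.succ
    rwa [one_lt_div h00, hsymm]
  set e : ℝ → ℝ := fun τ => Real.exp (m 0 - τ) with he
  have hΛ : ∀ τ i, Λ (e τ) i = -τ * (S i 0 / S 0 0) := by
    intro τ i
    have : Real.log (e τ) - m 0 = -τ := by rw [he, Real.log_exp]; ring
    simp only [Λ, this]
    split_ifs with hi
    · rw [hi, div_self h00.ne', mul_one]
    · ring
  have hBm : ∀ τ, MeasurableSet {y : Fin (n + 1) → ℝ | ∑ i, Real.exp (y i) ≤ e τ} := fun τ =>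
    measurableSet_le (by fun_prop) measurable_const
  have hCm : ∀ τ, MeasurableSet {y : Fin (n + 1) → ℝ | Real.exp (y 0) ≤ e τ} := fun τ =>
    measurableSet_le (by fun_prop) measurable_const
  have hC0 : ∀ τ (x : Fin (n + 1) → ℝ),
      Real.exp ((m + Λ (e τ) + x) 0) ≤ e τ ↔ x 0 ≤ 0 := by
    intro τ x
    rw [he, Real.exp_le_exp, Pi.add_apply, Pi.add_apply, hΛ, div_self h00.ne']
    constructor <;> intro h <;> linarith
  have hBC : ∀ τ (y : Fin (n + 1) → ℝ), ∑ i, Real.exp (y i) ≤ e τ → Real.exp (y 0) ≤ e τ :=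
    fun τ y h => (Finset.single_le_sum (f := fun i => Real.exp (y i))
      (fun _ _ => Real.exp_nonneg _) (Finset.mem_univ 0)).trans h
  have hB : ∀ x : Fin (n + 1) → ℝ, x 0 < 0 → ∀ᶠ τ in atTop,
      m + Λ (e τ) + Function.update x 0 (x 0 / τ) ∈
        {y : Fin (n + 1) → ℝ | ∑ i, Real.exp (y i) ≤ e τ} := by
    intro x hx
    filter_upwards [eventually_sum_exp_le m (fun i => S i 0 / S 0 0) x (div_self h00.ne')
      hslope hx] with τ hτ
    simpa only [Set.mem_ofPred_eq, Pi.add_apply, hΛ] using hτ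
  have hT := tendsto_rescaled_likelihoodRatio_pow hS m (Λ := fun τ => Λ (e τ)) hΛ
    two_pos hBm (fun τ x hx => (hC0 τ x).1 (hBC τ _ hx)) hB
  have hα := tendsto_rescaled_likelihoodRatio_pow hS m (Λ := fun τ => Λ (e τ)) hΛ
    one_pos hBm (fun τ x hx => (hC0 τ x).1 (hBC τ _ hx)) hB
  have hZ := tendsto_rescaled_likelihoodRatio_pow hS m (Λ := fun τ => Λ (e τ)) hΛ
    two_pos hCm (fun τ x hx => (hC0 τ x).1 hx) fun x hx => (hB x hx).mono fun τ h => hBC τ _ h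
  obtain ⟨c, hc, C, hC, hw⟩ := exists_mvnPdf_zero_le hS
  have hI : 0 < tiltedHalfSpaceIntegral ((2 : ℕ) / S 0 0) (mvnPdf 0 S) :=
    tiltedHalfSpaceIntegral_pos (by positivity) hc hC (continuous_mvnPdf 0 S)
      (mvnPdf_pos hS 0) hw
  have hlim := ((hT.sub (hα.mul (tendsto_exp_mul_stdNormCDF h00))).neg).div
    (hZ.sub (tendsto_mul_exp_mul_stdNormCDF_sq h00)) (by simpa using hI.ne')
  rw [mul_zero, sub_zero, neg_div, div_self hI.ne'] at hlim
  have hτ : Tendsto (fun γ : ℝ => m 0 - Real.log γ) (nhdsWithin 0 (Set.Ioi 0)) atTop :=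
    tendsto_atTop_add_const_left _ (m 0) (tendsto_neg_atBot_atTop.comp Real.tendsto_log_nhdsGT_zero)
  refine (hlim.comp hτ).congr' ?_
  filter_upwards [self_mem_nhdsWithin, hτ.eventually_gt_atTop 0] with γ hγ hpos
  have hγ' : e (m 0 - Real.log γ) = γ := by
    rw [he]
    simp [Real.exp_log hγ]
  simp only [Function.comp_apply, Pi.div_apply, hγ', pow_one]
  rw [show -(m 0 - Real.log γ) = Real.log γ - m 0 by ring]
  set τ := m 0 - Real.log γ
  have hexp2 : Real.exp ((2 : ℕ) * τ ^ 2 / (2 * S 0 0)) =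
      Real.exp (τ ^ 2 / (2 * S 0 0)) ^ 2 := by
    rw [← Real.exp_nat_mul]
    congr 1
    ring
  rw [hexp2, Nat.cast_one, one_mul]
  change -(τ * Real.exp (τ ^ 2 / (2 * S 0 0)) ^ 2 * ET2 γ -
      τ * Real.exp (τ ^ 2 / (2 * S 0 0)) * α γ * (Real.exp (τ ^ 2 / (2 * S 0 0)) * P γ)) /
    (τ * Real.exp (τ ^ 2 / (2 * S 0 0)) ^ 2 * EZ2 γ -
      τ * (Real.exp (τ ^ 2 / (2 * S 0 0)) * P γ) ^ 2) = _
  have hne : τ * Real.exp (τ ^ 2 / (2 * S 0 0)) ^ 2 ≠ 0 := by positivity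
  rw [← mul_div_mul_left (-(ET2 γ - α γ * P γ)) (EZ2 γ - P γ ^ 2) hne]
  congr 1 <;> ring
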